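/- arXiv:2605.02632 — 3 statements merged into one kernel-verified Lean document; each statement's English description precedes it below -/
import Mathlib

section
/- Let r ≥ 5 be a prime and let z, s be nonzero integers with v_r(z) = 1 and v_r(s) = (r+1)/2. Let γ₀ be a root of F(x) = (−z)^((r−1)/2)·x·h(2 − x²/z) + s in an algebraic closure of ℚ_r, and let O be the integral closure of ℤ_r (the ring of r-adic integers) in ℚ_r(γ₀). Then the r-adic valuation of the discriminant of O over ℤ_r equals (3r − 1)/2; that is, for any ℤ_r-basis of O, the discriminant of that basis has r-adic valuation (3r − 1)/2. -/
open Polynomial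

/-- `h` is the minimal polynomial (over `ℤ`) of `ζ_r + ζ_r⁻¹`, where `ζ_r = exp(2πi/r)`
is a primitive `r`-th root of unity. -/
noncomputable def hpoly (r : ℕ) : Polynomial ℤ :=
  minpoly ℤ (Complex.exp (2 * Real.pi * Complex.I / (r : ℂ)) +
    (Complex.exp (2 * Real.pi * Complex.I / (r : ℂ)))⁻¹)

/-- The polynomial `F(x) = (-z)^((r-1)/2) · x · h(2 - x²/z) + s`, over a field `K`. -/
noncomputable def Fpoly (r : ℕ) (z s : ℤ) (K : Type*) [Field K] : Polynomial K :=
  C ((((-z) ^ ((r - 1) / 2) : ℤ) : K)) * X *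
    (((hpoly r).map (Int.castRingHom K)).comp (C 2 - C ((z : K))⁻¹ * X ^ 2)) + C ((s : K))

/-!
Put `x = 2 - γ₀² / z` and `a = 2 - s² / z ^ r`. With `r = 2n + 1`, the polynomial `h` is
`W_n = S_n + S_{n-1}`, and `(X - 2) W_n² = C_r - 2` turns `F(γ₀) = 0` into `C_r(x) = a`, while
`F(γ₀) = 0` itself recovers `γ₀` from `x`; so `ℚ_r(γ₀) = ℚ_r(x)`. As `C_r - 2 ≡ (X - 2) ^ r` modulo
`r` and `a - 2 = -s² / z ^ r` is a uniformizer, `C_r - a` is Eisenstein at `X = 2`, hence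
`O = ℤ_r[x - 2]`. Since `C_r' = r S_{r-1}` and `(X² - 4) S_{r-1}² = C_r² - 4`, taking norms gives
`disc² = r ^ (2r) (a² - 4) ^ (r - 1)`, where `a² - 4` has valuation `1`.
-/

section ChebyshevIdentities

variable (R : Type*) [CommRing R]

/-- The rescaled Chebyshev polynomial of the fourth kind, characterized by
`(w - w⁻¹) * W_n (w² + w⁻²) = w ^ (2n + 1) - w ^ (-(2n + 1))`. -/
noncomputable def chebyshevW (n : ℤ) : R[X] :=
  Chebyshev.S R n + Chebyshev.S R (n - 1)

theorem map_chebyshevW {R S : Type*} [CommRing R] [CommRing S] (f : R →+* S) (n : ℤ) :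
    (chebyshevW R n).map f = chebyshevW S n := by
  simp only [chebyshevW, Polynomial.map_add, Chebyshev.map_S]

theorem derivative_chebyshevC (n : ℤ) :
    derivative (Chebyshev.C R n) = n * Chebyshev.S R (n - 1) := by
  induction n using Chebyshev.induct with
  | zero => simp
  | one => simp
  | add_two n ih₁ ih₀ =>
    have hS : Chebyshev.S R (n + 1) = X * Chebyshev.S R n - Chebyshev.S R (n - 1) :=
      Chebyshev.S_add_one R n
    have hC : Chebyshev.C R (n + 1) = 2 * Chebyshev.S R (n + 1) - X * Chebyshev.S R n := by
      simpa using Chebyshev.C_eq_S_sub_X_mul_S R (n + 1)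
    rw [Chebyshev.C_add_two, derivative_sub, derivative_mul, derivative_X, ih₁, ih₀, hC,
      show (n + 2 - 1 : ℤ) = n + 1 by ring, show (n + 1 - 1 : ℤ) = n by ring]
    push_cast
    linear_combination (-n : R[X]) * hS
  | neg_add_one n ih₁ ih₀ =>
    have hS := Chebyshev.S_sub_two R (-n)
    have hC : Chebyshev.C R (-n) = 2 * Chebyshev.S R (-n) - X * Chebyshev.S R (-n - 1) :=
      Chebyshev.C_eq_S_sub_X_mul_S R (-n)
    rw [Chebyshev.C_sub_one, derivative_sub, derivative_mul, derivative_X, ih₁, ih₀, hC,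
      show (-n - 1 - 1 : ℤ) = -n - 2 by ring, show (-n + 1 - 1 : ℤ) = -n by ring]
    push_cast
    linear_combination (n + 1 : R[X]) * hS

theorem X_sq_sub_four_mul_chebyshevS_sq (n : ℤ) :
    (X ^ 2 - 4) * Chebyshev.S R (n - 1) ^ 2 = Chebyshev.C R n ^ 2 - 4 := by
  have hS : Chebyshev.S R (n - 1) ^ 2 + Chebyshev.S R n ^ 2
      - X * Chebyshev.S R (n - 1) * Chebyshev.S R n = 1 := by
    simpa using Chebyshev.S_sq_add_S_sq R (n - 1)
  rw [Chebyshev.C_eq_S_sub_X_mul_S]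
  linear_combination -4 * hS

theorem X_sub_two_mul_chebyshevW_sq (n : ℤ) :
    (X - 2) * chebyshevW R n ^ 2 = Chebyshev.C R (2 * n + 1) - 2 := by
  have hS : Chebyshev.S R (n - 1) ^ 2 + Chebyshev.S R n ^ 2
      - X * Chebyshev.S R (n - 1) * Chebyshev.S R n = 1 := by
    simpa using Chebyshev.S_sq_add_S_sq R (n - 1)
  have hC : Chebyshev.C R (n + 1) = X * Chebyshev.S R n - 2 * Chebyshev.S R (n - 1) := by
    have h := Chebyshev.C_eq_S_sub_X_mul_S R (n + 1)
    rw [Chebyshev.S_add_one, add_sub_cancel_right] at h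
    linear_combination h
  have hmul : Chebyshev.C R (n + 1) * Chebyshev.C R n = Chebyshev.C R (2 * n + 1) + X := by
    rw [Chebyshev.C_mul_C, show n + 1 + n = 2 * n + 1 by ring, show n + 1 - n = 1 by ring,
      Chebyshev.C_one]
  rw [hC, Chebyshev.C_eq_S_sub_X_mul_S R n] at hmul
  rw [chebyshevW]
  linear_combination hmul - (X + 2) * hS

theorem isMonicOfDegree_chebyshevS [Nontrivial R] (n : ℕ) :
    IsMonicOfDegree (Chebyshev.S R n) n := by
  induction n using Nat.twoStepInduction with
  | zero => simp [isMonicOfDegree_zero_iff]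
  | one => simpa using isMonicOfDegree_X R
  | more n ih₀ ih₁ =>
    have h : IsMonicOfDegree (X * Chebyshev.S R (n + 1 : ℕ)) (n + 2) := by
      rw [show n + 2 = 1 + (n + 1) by ring]
      exact (isMonicOfDegree_X R).mul ih₁
    push_cast at h ⊢
    rw [Chebyshev.S_add_two]
    exact h.sub (by rw [ih₀.natDegree_eq]; omega)

theorem natDegree_chebyshevS_sub_one_lt [Nontrivial R] {n : ℕ} (hn : n ≠ 0) :
    (Chebyshev.S R (n - 1 : ℤ)).natDegree < n := by
  obtain ⟨m, rfl⟩ := Nat.exists_eq_succ_of_ne_zero hn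
  rw [Nat.cast_succ, add_sub_cancel_right, (isMonicOfDegree_chebyshevS R m).natDegree_eq]
  exact m.lt_succ_self

theorem isMonicOfDegree_chebyshevW [Nontrivial R] {n : ℕ} (hn : n ≠ 0) :
    IsMonicOfDegree (chebyshevW R n) n :=
  (isMonicOfDegree_chebyshevS R n).add_right (natDegree_chebyshevS_sub_one_lt R hn)

theorem isMonicOfDegree_chebyshevC [Nontrivial R] {n : ℕ} (hn : n ≠ 0) :
    IsMonicOfDegree (Chebyshev.C R n) n := by
  induction n using Nat.twoStepInduction with
  | zero => contradiction
  | one => simpa using isMonicOfDegree_X R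
  | more n ih₀ ih₁ =>
    have h : IsMonicOfDegree (X * Chebyshev.C R (n + 1 : ℕ)) (n + 2) := by
      rw [show n + 2 = 1 + (n + 1) by ring]
      exact (isMonicOfDegree_X R).mul (ih₁ n.succ_ne_zero)
    push_cast at h ⊢
    rw [Chebyshev.C_add_two]
    refine h.sub ?_
    rcases eq_or_ne n 0 with rfl | hn₀
    · rw [Nat.cast_zero, Chebyshev.C_zero, natDegree_ofNat]; norm_num
    · rw [(ih₀ hn₀).natDegree_eq]; omega

theorem isMonicOfDegree_chebyshevC_sub_C [Nontrivial R] {n : ℕ} (hn : n ≠ 0) (a : R) :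
    IsMonicOfDegree (Chebyshev.C R n - C a) n :=
  (isMonicOfDegree_chebyshevC R hn).sub (by rw [natDegree_C]; exact Nat.pos_of_ne_zero hn)

theorem chebyshevC_sub_two_charP (p : ℕ) [Fact p.Prime] [CharP R p] :
    Chebyshev.C R p - 2 = (X - 2) ^ p := by
  have two_pow : (2 : R[X]) ^ p = 2 := map_ofNat (frobenius R[X] p) 2
  rw [← dickson_one_one_eq_chebyshev_C, dickson_one_one_charP, sub_pow_char, two_pow]

theorem eval_add_chebyshevC {x y : R} (h : x * y = 1) (n : ℕ) :
    (Chebyshev.C R n).eval (x + y) = x ^ n + y ^ n := by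
  rw [← dickson_one_one_eq_chebyshev_C, dickson_one_one_eval_add_inv x y h]

end ChebyshevIdentities

section Eisenstein

theorem aeval_taylor {R A : Type*} [CommRing R] [CommRing A] [Algebra R A] (x : A) (t : R)
    (f : R[X]) : aeval x (taylor t f) = aeval (x + algebraMap R A t) f := by
  rw [taylor_apply, aeval_comp, map_add, aeval_X, aeval_C]

theorem monic_taylor {R : Type*} [CommRing R] {f : R[X]} (hf : f.Monic) (t : R) :
    (taylor t f).Monic := by
  rwa [Monic, leadingCoeff_taylor]

theorem taylor_isEisensteinAt {R k : Type*} [CommRing R] [CommRing k] [IsDomain k] (φ : R →+* k)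
    {f : R[X]} (hf : f.Monic) {t : R} {m : ℕ} (hdvd : f.map φ ∣ (X - C (φ t)) ^ m)
    (ht : f.eval t ∉ RingHom.ker φ ^ 2) : (taylor t f).IsEisensteinAt (RingHom.ker φ) := by
  obtain ⟨j, -, hj⟩ := (dvd_prime_pow (prime_X_sub_C (φ t)) m).1 hdvd
  have hmap : f.map φ = (X - C (φ t)) ^ j :=
    eq_of_monic_of_associated (hf.map φ) ((monic_X_sub_C _).pow j) hj
  have hdeg : f.natDegree = j := by
    rw [← hf.natDegree_map φ, hmap, natDegree_pow, natDegree_X_sub_C, mul_one]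
  have hmap_taylor : (taylor t f).map φ = X ^ j := by
    rw [map_taylor, hmap, taylor_pow]
    simp
  refine Monic.isEisensteinAt_of_mem_of_notMem (monic_taylor hf t) (RingHom.ker_ne_top φ)
    (fun {i} hi => ?_) ?_
  · rw [natDegree_taylor, hdeg] at hi
    rw [RingHom.mem_ker, ← coeff_map, hmap_taylor, coeff_X_pow, if_neg hi.ne]
  · rwa [taylor_coeff_zero]

theorem irreducible_of_taylor_isEisensteinAt {R : Type*} [CommRing R] [IsDomain R]
    {P : Ideal R} (hP : P.IsPrime) {f : R[X]} (hf : f.Monic) {t : R}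
    (heis : (taylor t f).IsEisensteinAt P) (hdeg : 0 < f.natDegree) : Irreducible f := by
  rw [← MulEquiv.irreducible_iff (taylorEquiv t)]
  exact heis.irreducible hP (monic_taylor hf t).isPrimitive (by rwa [natDegree_taylor])

theorem notMem_span_singleton_sq {R : Type*} [CommRing R] {ϖ : R} (hϖ : Irreducible ϖ) :
    ϖ ∉ Ideal.span {ϖ} ^ 2 := by
  rw [Ideal.span_singleton_pow, Ideal.mem_span_singleton, sq]
  exact fun hdvd => hϖ.not_isUnit (hϖ.squarefree ϖ hdvd)

theorem minpoly_eq_of_irreducible_of_monic {R L : Type*} [CommRing R] [IsDomain R]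
    [IsIntegrallyClosed R] [CommRing L] [IsDomain L] [Algebra R L] [Module.IsTorsionFree R L]
    {f : R[X]} (hf : Irreducible f) (hmonic : f.Monic) {x : L} (hx : aeval x f = 0) :
    minpoly R x = f := by
  have hint : IsIntegral R x := ⟨f, hmonic, hx⟩
  refine eq_of_monic_of_associated (minpoly.monic hint) hmonic ?_
  refine ((minpoly.irreducible hint).dvd_irreducible_iff_associated hf).1 ?_
  exact minpoly.isIntegrallyClosed_dvd hint hx

theorem adjoin_singleton_eq_integralClosure {R K L : Type*} [CommRing R] [IsDomain R]
    [IsDiscreteValuationRing R] [Field K] [Field L] [Algebra R K] [IsFractionRing R K] [Algebra K L]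
    [Algebra R L] [IsScalarTower R K L] [Algebra.IsSeparable K L] (B : PowerBasis K L)
    (hint : IsIntegral R B.gen) {ϖ : R} (hϖ : Irreducible ϖ)
    (heis : (minpoly R B.gen).IsEisensteinAt (Ideal.span {ϖ})) :
    Algebra.adjoin R {B.gen} = integralClosure R L := by
  have : FiniteDimensional K L := B.finite
  refine le_antisymm (Algebra.adjoin_le (Set.singleton_subset_iff.2 hint)) fun x hx => ?_
  have hdiscr : IsIntegral R (Algebra.discr K B.basis) :=
    Algebra.discr_isIntegral K fun i => by rw [B.basis_eq_pow]; exact hint.pow _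
  obtain ⟨d, hd⟩ := IsIntegrallyClosed.isIntegral_iff.1 hdiscr
  have hd₀ : d ≠ 0 := by
    rintro rfl
    exact Algebra.discr_not_zero_of_basis K B.basis (by rw [← hd, map_zero])
  obtain ⟨n, u, hu⟩ := IsDiscreteValuationRing.associated_pow_irreducible hd₀ hϖ
  have hmem : ϖ ^ n • x ∈ Algebra.adjoin R {B.gen} := by
    rw [← hu, mul_comm, mul_smul, ← algebraMap_smul K d, hd]
    exact Subalgebra.smul_mem _ (Algebra.discr_mul_isIntegral_mem_adjoin K hint hx) _
  exact mem_adjoin_of_smul_prime_pow_smul_of_minpoly_isEisensteinAt hϖ.prime hint hx hmem heis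

end Eisenstein

section MinimalPolynomialOfCosine

theorem irreducible_chebyshevW {n : ℕ} (hp : (2 * n + 1).Prime) : Irreducible (chebyshevW ℤ n) := by
  have : Fact (2 * n + 1).Prime := ⟨hp⟩
  have hn : n ≠ 0 := by rintro rfl; exact Nat.not_prime_one hp
  have hψ := isMonicOfDegree_chebyshevW ℤ hn
  have hprime : (RingHom.ker (Int.castRingHom (ZMod (2 * n + 1)))).IsPrime := RingHom.ker_isPrime _
  refine irreducible_of_taylor_isEisensteinAt (t := 2) hprime hψ.monic
    (taylor_isEisensteinAt _ hψ.monic (m := 2 * n + 1) ?_ ?_)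
    (by rw [hψ.natDegree_eq]; exact Nat.pos_of_ne_zero hn)
  · have hfrob := chebyshevC_sub_two_charP (ZMod (2 * n + 1)) (2 * n + 1)
    push_cast at hfrob
    rw [← X_sub_two_mul_chebyshevW_sq] at hfrob
    rw [map_chebyshevW, map_ofNat, map_ofNat, ← hfrob]
    exact Dvd.dvd.mul_left (dvd_pow_self _ two_ne_zero) _
  · have heval : (chebyshevW ℤ n).eval 2 = ((2 * n + 1 : ℕ) : ℤ) := by
      rw [chebyshevW, eval_add, Chebyshev.S_eval_two, Chebyshev.S_eval_two]
      push_cast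
      ring
    rw [heval, ZMod.ker_intCastRingHom]
    exact notMem_span_singleton_sq (Nat.prime_iff_prime_int.1 hp).irreducible

theorem eval_add_inv_chebyshevW {K : Type*} [Field K] {ζ : K} (n : ℕ) (hζ : ζ ^ (2 * n + 1) = 1)
    (hζ₁ : ζ ≠ 1) : (chebyshevW K n).eval (ζ + ζ⁻¹) = 0 := by
  have hζ₀ : ζ ≠ 0 := by rintro rfl; simp at hζ
  have hC := eval_add_chebyshevC K (mul_inv_cancel₀ hζ₀) (2 * n + 1)
  have hψ := congrArg (eval (ζ + ζ⁻¹)) (X_sub_two_mul_chebyshevW_sq K n)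
  push_cast at hC
  simp only [eval_mul, eval_sub, eval_pow, eval_X, eval_ofNat, hC, inv_pow, hζ, inv_one] at hψ
  have hne : ζ + ζ⁻¹ - 2 ≠ 0 := by
    rw [show ζ + ζ⁻¹ - 2 = (ζ - 1) ^ 2 / ζ by field_simp; ring]
    exact div_ne_zero (pow_ne_zero 2 (sub_ne_zero.2 hζ₁)) hζ₀
  have hzero : (chebyshevW K n).eval (ζ + ζ⁻¹) ^ 2 = 0 :=
    (mul_eq_zero.1 (hψ.trans (by norm_num))).resolve_left hne
  exact pow_eq_zero_iff two_ne_zero |>.1 hzero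

theorem hpoly_eq_chebyshevW {n : ℕ} (hp : (2 * n + 1).Prime) :
    hpoly (2 * n + 1) = chebyshevW ℤ n := by
  have hn : n ≠ 0 := by rintro rfl; exact Nat.not_prime_one hp
  have hζ := Complex.isPrimitiveRoot_exp (2 * n + 1) (Nat.succ_ne_zero _)
  refine minpoly_eq_of_irreducible_of_monic (irreducible_chebyshevW hp)
    (isMonicOfDegree_chebyshevW ℤ hn).monic ?_
  rw [← eval_map_algebraMap, map_chebyshevW]
  exact eval_add_inv_chebyshevW n hζ.pow_eq_one (hζ.ne_one hp.one_lt)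

end MinimalPolynomialOfCosine

section Discriminant

theorem associated_discr {R A ι ι' : Type*} [CommRing R] [Nontrivial R] [CommRing A] [Algebra R A]
    [Fintype ι] [DecidableEq ι] [Fintype ι'] [DecidableEq ι'] (b : Module.Basis ι R A)
    (b' : Module.Basis ι' R A) : Associated (Algebra.discr R b) (Algebra.discr R b') := by
  let c := b'.reindex (b'.indexEquiv b)
  have hdet : IsUnit (b.toMatrix c).det := b.det_apply c ▸ b.isUnit_det c
  have hc : Algebra.discr R c = Algebra.discr R b' := by
    rw [Module.Basis.coe_reindex, Algebra.discr_reindex]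
  rw [← hc, ← b.toMatrix_map_vecMul c, Algebra.discr_of_matrix_vecMul]
  exact (associated_unit_mul_left _ _ (hdet.pow 2)).symm

theorem exists_unit_discr_eq_mul {R K L ι : Type*} [CommRing R] [IsDomain R]
    [IsIntegrallyClosed R] [Field K] [Field L] [Algebra R K] [IsFractionRing R K] [Algebra K L]
    [Algebra R L] [IsScalarTower R K L] (B : PowerBasis K L) (hint : IsIntegral R B.gen)
    (hB : Algebra.adjoin R {B.gen} = integralClosure R L) [Fintype ι] [DecidableEq ι]
    (b : Module.Basis ι R (integralClosure R L)) :
    ∃ u : Rˣ, Algebra.discr K B.basis = algebraMap R K (Algebra.discr R b * u) := by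
  have : FiniteDimensional K L := B.finite
  have := Module.IsTorsionFree.trans_faithfulSMul R K L
  have : IsLocalization (Algebra.algebraMapSubmonoid (integralClosure R L) (nonZeroDivisors R)) L :=
    IsIntegralClosure.isLocalization R K L (integralClosure R L)
  let B' : PowerBasis R (integralClosure R L) :=
    (Algebra.adjoin.powerBasis' hint).map (Subalgebra.equivOfEq _ _ hB)
  have hgen : (B'.gen : L) = B.gen := by simp [B']
  have hdim : B'.dim = B.dim := by
    rw [← B.finrank, Module.finrank_eq_card_basis
      (B'.basis.localizationLocalization K (nonZeroDivisors R) L), Fintype.card_fin]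
  have hdiscr : Algebra.discr K B.basis = algebraMap R K (Algebra.discr R B'.basis) := by
    rw [← Algebra.discr_localizationLocalization R (nonZeroDivisors R) L B'.basis,
      ← Algebra.discr_reindex K _ (finCongr hdim)]
    congr 1
    ext i
    rw [Function.comp_apply, Module.Basis.localizationLocalization_apply, B'.basis_eq_pow,
      B.basis_eq_pow, map_pow]
    exact congrArg (· ^ (i : ℕ)) hgen.symm
  obtain ⟨u, hu⟩ := associated_discr b B'.basis
  exact ⟨u, by rw [hu, hdiscr]⟩

theorem norm_algebraMap_sub_gen {K L : Type*} [Field K] [CommRing L] [Algebra K L]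
    (B : PowerBasis K L) (t : K) :
    Algebra.norm K (algebraMap K L t - B.gen) = (minpoly K B.gen).eval t := by
  rw [← charpoly_leftMulMatrix, Matrix.eval_charpoly, Algebra.norm_eq_matrix_det B.basis, map_sub,
    AlgHom.commutes]
  rfl

theorem norm_gen_add_two_sq_sub_four {K L : Type*} [Field K] [CommRing L] [Algebra K L]
    (B : PowerBasis K L) {n : ℕ} (hn : Odd n) {a : K}
    (hB : minpoly K B.gen = taylor 2 (Chebyshev.C K n - C a)) :
    Algebra.norm K ((B.gen + 2) ^ 2 - 4) = a ^ 2 - 4 := by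
  have hfactor : (B.gen + 2) ^ 2 - 4 =
      (algebraMap K L 0 - B.gen) * (algebraMap K L (-4) - B.gen) := by
    rw [map_zero, map_neg, map_ofNat]
    ring
  rw [hfactor, map_mul, norm_algebraMap_sub_gen, norm_algebraMap_sub_gen, hB, taylor_eval,
    taylor_eval, show (-4 + 2 : K) = -2 by ring, zero_add, eval_sub, eval_sub, eval_C, eval_C,
    Chebyshev.C_eval_two, Chebyshev.C_eval_neg_two, Int.negOnePow_odd _ (mod_cast hn)]
  push_cast
  ring

theorem discr_sq_of_minpoly_eq_taylor_chebyshevC {K L : Type*} [Field K] [Field L] [Algebra K L]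
    [Algebra.IsSeparable K L] (B : PowerBasis K L) {n : ℕ} (hn : Odd n) {a : K}
    (ha : a ^ 2 ≠ 4) (hB : minpoly K B.gen = taylor 2 (Chebyshev.C K n - C a)) :
    Algebra.discr K B.basis ^ 2 = (n : K) ^ (2 * n) * (a ^ 2 - 4) ^ (n - 1) := by
  have : FiniteDimensional K L := B.finite
  have hn₀ : n ≠ 0 := by rintro rfl; simp at hn
  have haeval (g : K[X]) : aeval B.gen (taylor 2 g) = aeval (B.gen + 2) g := by
    rw [aeval_taylor, map_ofNat]
  have hrank : Module.finrank K L = n := by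
    rw [B.finrank, ← B.natDegree_minpoly, hB, natDegree_taylor,
      (isMonicOfDegree_chebyshevC_sub_C K hn₀ a).natDegree_eq]
  set σ := aeval (B.gen + 2) (Chebyshev.S K (n - 1)) with hσ
  have hder : aeval B.gen (derivative (minpoly K B.gen)) = algebraMap K L n * σ := by
    rw [hB, taylor_apply, derivative_comp, derivative_sub, derivative_C, sub_zero,
      derivative_chebyshevC]
    simp [← taylor_apply, haeval, hσ]
  have hroot : aeval (B.gen + 2) (Chebyshev.C K n) = algebraMap K L a := by
    have h := minpoly.aeval K B.gen
    rwa [hB, haeval, map_sub, aeval_C, sub_eq_zero] at h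
  have hσ_sq : ((B.gen + 2) ^ 2 - 4) * σ ^ 2 = algebraMap K L (a ^ 2 - 4) := by
    have h := congrArg (aeval (B.gen + 2)) (X_sq_sub_four_mul_chebyshevS_sq K n)
    simpa only [map_mul, map_sub, map_pow, aeval_X, map_ofNat, hroot] using h
  have hnorm_σ : Algebra.norm K σ ^ 2 = (a ^ 2 - 4) ^ (n - 1) := by
    have h := congrArg (Algebra.norm K) hσ_sq
    rw [map_mul, map_pow, norm_gen_add_two_sq_sub_four B hn hB, Algebra.norm_algebraMap, hrank] at h
    rw [← mul_right_inj' (sub_ne_zero.2 ha), h, mul_pow_sub_one hn₀]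
  rw [Algebra.discr_powerBasis_eq_norm, hder, map_mul, Algebra.norm_algebraMap, hrank,
    ← hnorm_σ, mul_pow, mul_pow, ← pow_mul, pow_mul', neg_one_sq, one_pow]
  ring

end Discriminant

section DiscreteValuationRing

variable {R : Type*} [CommRing R] [IsDomain R] [IsDiscreteValuationRing R] {p : ℕ} [Fact p.Prime]
  [CharP (IsLocalRing.ResidueField R) p] {a : R}

theorem taylor_chebyshevC_sub_C_isEisensteinAt (ha : Irreducible (a - 2)) :
    (taylor 2 (Chebyshev.C R p - C a)).IsEisensteinAt (Ideal.span {a - 2}) := by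
  have hp₀ : p ≠ 0 := (Fact.out : p.Prime).ne_zero
  have hker : RingHom.ker (IsLocalRing.residue R) = Ideal.span {a - 2} := by
    rw [IsLocalRing.ker_residue, ha.maximalIdeal_eq]
  have hres : IsLocalRing.residue R a = 2 := by
    have hmem : a - 2 ∈ RingHom.ker (IsLocalRing.residue R) :=
      hker ▸ Ideal.mem_span_singleton_self _
    rwa [RingHom.mem_ker, map_sub, map_ofNat, sub_eq_zero] at hmem
  rw [← hker]
  refine taylor_isEisensteinAt _ (isMonicOfDegree_chebyshevC_sub_C R hp₀ a).monic (m := p) ?_ ?_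
  · rw [Polynomial.map_sub, Chebyshev.map_C, map_C, hres, map_ofNat, map_ofNat,
      chebyshevC_sub_two_charP, map_ofNat]
  · rw [eval_sub, Chebyshev.C_eval_two, eval_C, hker, ← neg_mem_iff, neg_sub]
    exact notMem_span_singleton_sq ha

theorem isUnit_add_two (hp : p ≠ 2) (ha : Irreducible (a - 2)) : IsUnit (a + 2) := by
  by_contra hnonunit
  have hmem : (4 : R) ∈ IsLocalRing.maximalIdeal R := by
    have h := sub_mem ((IsLocalRing.mem_maximalIdeal _).2 hnonunit)
      ((IsLocalRing.mem_maximalIdeal _).2 ha.not_isUnit)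
    rwa [show a + 2 - (a - 2) = 4 by ring] at h
  rw [← IsLocalRing.residue_eq_zero_iff, map_ofNat] at hmem
  have hdvd : p ∣ 2 ^ 2 :=
    (CharP.cast_eq_zero_iff (IsLocalRing.ResidueField R) p _).1 (mod_cast hmem)
  exact hp ((Nat.prime_dvd_prime_iff_eq Fact.out Nat.prime_two).1
    ((Fact.out : p.Prime).dvd_of_dvd_pow hdvd))

theorem associated_sq_sub_four (hp : p ≠ 2) (ha : Irreducible (a - 2)) :
    Associated (a ^ 2 - 4) (a - 2) := by
  rw [show a ^ 2 - 4 = (a - 2) * (a + 2) by ring]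
  exact associated_mul_unit_left _ _ (isUnit_add_two hp ha)

theorem minpoly_eq_taylor_chebyshevC_sub_C {L : Type*} [CommRing L] [IsDomain L] [Algebra R L]
    [Module.IsTorsionFree R L] (ha : Irreducible (a - 2)) {y : L}
    (hy : aeval y (taylor 2 (Chebyshev.C R p - C a)) = 0) :
    minpoly R y = taylor 2 (Chebyshev.C R p - C a) := by
  have hp : p.Prime := Fact.out
  have hf := isMonicOfDegree_chebyshevC_sub_C R hp.ne_zero a
  refine minpoly_eq_of_irreducible_of_monic ?_ (monic_taylor hf.monic 2) hy
  refine (taylor_chebyshevC_sub_C_isEisensteinAt ha).irreducible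
    ((Ideal.span_singleton_prime ha.ne_zero).2 ha.prime) (monic_taylor hf.monic 2).isPrimitive ?_
  rw [natDegree_taylor, hf.natDegree_eq]
  exact hp.pos

theorem associated_discr_sq_integralClosure {K L ι : Type*} [Field K] [Field L] [Algebra R K]
    [IsFractionRing R K] [Algebra K L] [Algebra R L] [IsScalarTower R K L] [Algebra.IsSeparable K L]
    (hp : p ≠ 2) (ha : Irreducible (a - 2)) (B : PowerBasis K L)
    (hB : aeval B.gen (taylor 2 (Chebyshev.C R p - C a)) = 0) [Fintype ι] [DecidableEq ι]
    (b : Module.Basis ι R (integralClosure R L)) :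
    Associated (Algebra.discr R b ^ 2) ((p : R) ^ (2 * p) * (a - 2) ^ (p - 1)) := by
  have := Module.IsTorsionFree.trans_faithfulSMul R K L
  have hp_prime : p.Prime := Fact.out
  have hint : IsIntegral R B.gen :=
    ⟨_, monic_taylor (isMonicOfDegree_chebyshevC_sub_C R hp_prime.ne_zero a).monic 2, hB⟩
  have hminR := minpoly_eq_taylor_chebyshevC_sub_C ha hB
  have hminK : minpoly K B.gen = taylor 2 (Chebyshev.C K p - C (algebraMap R K a)) := by
    rw [minpoly.isIntegrallyClosed_eq_field_fractions' K hint, hminR, map_taylor,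
      Polynomial.map_sub, Chebyshev.map_C, map_C, map_ofNat]
  have hadjoin : Algebra.adjoin R {B.gen} = integralClosure R L :=
    adjoin_singleton_eq_integralClosure B hint ha
      (hminR ▸ taylor_chebyshevC_sub_C_isEisensteinAt ha)
  obtain ⟨u, hu⟩ := exists_unit_discr_eq_mul B hint hadjoin b
  have hassoc := associated_sq_sub_four hp ha
  have ha_ne : algebraMap R K a ^ 2 ≠ 4 := by
    rw [← sub_ne_zero, ← map_ofNat (algebraMap R K) 4, ← map_pow, ← map_sub,
      map_ne_zero_iff _ (IsFractionRing.injective R K)]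
    exact hassoc.ne_zero_iff.2 ha.ne_zero
  have hdiscr : (Algebra.discr R b * u) ^ 2 = (p : R) ^ (2 * p) * (a ^ 2 - 4) ^ (p - 1) := by
    apply IsFractionRing.injective R K
    rw [map_pow, ← hu, discr_sq_of_minpoly_eq_taylor_chebyshevC B
      (hp_prime.odd_of_ne_two hp) ha_ne hminK]
    simp only [map_mul, map_pow, map_sub, map_natCast, map_ofNat]
  calc Associated (Algebra.discr R b ^ 2) ((Algebra.discr R b * u) ^ 2) :=
      Associated.pow_pow ⟨u, rfl⟩
    Associated _ ((p : R) ^ (2 * p) * (a ^ 2 - 4) ^ (p - 1)) := by rw [hdiscr]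
    Associated _ _ := (hassoc.pow_pow).mul_left _

end DiscreteValuationRing

section TwistedEquation

variable {E : Type*} [Field E] {n : ℕ} {z s γ : E}

theorem eval_chebyshevC_of_mul_chebyshevW_add_eq_zero (hz : z ≠ 0)
    (h : (-z) ^ n * γ * (chebyshevW E n).eval (2 - γ ^ 2 / z) + s = 0) :
    (Chebyshev.C E (2 * n + 1)).eval (2 - γ ^ 2 / z) = 2 - s ^ 2 / z ^ (2 * n + 1) := by
  set ψ := (chebyshevW E n).eval (2 - γ ^ 2 / z) with hψ
  have hC : -(γ ^ 2 / z) * ψ ^ 2 = (Chebyshev.C E (2 * n + 1)).eval (2 - γ ^ 2 / z) - 2 := by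
    have h := congrArg (eval (2 - γ ^ 2 / z)) (X_sub_two_mul_chebyshevW_sq E n)
    simp only [eval_mul, eval_sub, eval_pow, eval_X, eval_ofNat, ← hψ] at h
    linear_combination h
  have hs : s ^ 2 = z ^ (2 * n) * γ ^ 2 * ψ ^ 2 := by
    rw [eq_neg_of_add_eq_zero_right h, neg_sq, mul_pow, mul_pow, ← pow_mul, mul_comm n,
      (even_two_mul n).neg_pow]
  rw [hs, eq_add_of_sub_eq hC.symm]
  field_simp
  ring

theorem root_mem_of_sq_div_mem {K : Type*} [Field K] [Algebra K E] (F : IntermediateField K E)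
    (hzF : z ∈ F) (hsF : s ∈ F) (hs : s ≠ 0) (hγF : γ ^ 2 / z ∈ F)
    (h : (-z) ^ n * γ * (chebyshevW E n).eval (2 - γ ^ 2 / z) + s = 0) :
    γ ∈ F := by
  set ψ := (chebyshevW E n).eval (2 - γ ^ 2 / z) with hψ
  have hψF : ψ ∈ F := by
    let x : F := 2 - ⟨γ ^ 2 / z, hγF⟩
    have hx : (2 - γ ^ 2 / z) = algebraMap F E x := rfl
    have hmap : ψ = algebraMap F E ((chebyshevW F n).eval x) := by
      rw [hψ, hx, ← map_chebyshevW (algebraMap F E), eval_map_apply]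
    exact hmap ▸ Subtype.property _
  have hne : (-z) ^ n * ψ ≠ 0 := fun h0 => hs (by linear_combination h - γ * h0)
  have hγ : γ = -s / ((-z) ^ n * ψ) := by
    rw [eq_div_iff hne]
    linear_combination h
  exact hγ ▸ div_mem (neg_mem hsF) (mul_mem (pow_mem (neg_mem hzF) n) hψF)

theorem aeval_taylor_chebyshevC_sub_C_eq_zero {R : Type*} [CommRing R] [Algebra R E] (hz : z ≠ 0)
    (h : (-z) ^ n * γ * (chebyshevW E n).eval (2 - γ ^ 2 / z) + s = 0)
    {ϖ : R} (hϖ : algebraMap R E ϖ = s ^ 2 / z ^ (2 * n + 1)) :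
    aeval (-(γ ^ 2 / z)) (taylor 2 (Chebyshev.C R (2 * n + 1) - C (2 - ϖ))) = 0 := by
  rw [aeval_taylor, map_sub, aeval_C, ← eval_map_algebraMap, Chebyshev.map_C, map_ofNat,
    neg_add_eq_sub, eval_chebyshevC_of_mul_chebyshevW_add_eq_zero hz h, map_sub, map_ofNat, hϖ,
    sub_self]

theorem adjoin_neg_sq_div_eq_top {K : Type*} [Field K] [Algebra K E] {z s : K} (hs : s ≠ 0)
    (h : (-algebraMap K E z) ^ n * γ *
      (chebyshevW E n).eval (2 - γ ^ 2 / algebraMap K E z) + algebraMap K E s = 0)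
    (hgen : IntermediateField.adjoin K {γ} = ⊤) :
    IntermediateField.adjoin K {-(γ ^ 2 / algebraMap K E z)} = ⊤ := by
  rw [eq_top_iff, ← hgen, IntermediateField.adjoin_simple_le_iff]
  refine root_mem_of_sq_div_mem _ (algebraMap_mem _ z) (algebraMap_mem _ s)
    ((map_ne_zero (algebraMap K E)).2 hs) ?_ h
  rw [← neg_mem_iff]
  exact IntermediateField.mem_adjoin_simple_self _ _

theorem aeval_mul_hpoly_comp_add {K : Type*} [Field K] [Algebra K E] (hp : (2 * n + 1).Prime)
    (z s : K) (γ : E) :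
    aeval γ (C ((-z) ^ n) * X * ((hpoly (2 * n + 1)).map (Int.castRingHom K)).comp
      (C 2 - C z⁻¹ * X ^ 2) + C s) =
    (-algebraMap K E z) ^ n * γ *
      (chebyshevW E n).eval (2 - γ ^ 2 / algebraMap K E z) + algebraMap K E s := by
  have hx : aeval γ (C 2 - C z⁻¹ * X ^ 2) = 2 - γ ^ 2 / algebraMap K E z := by
    simp only [map_sub, map_mul, map_pow, aeval_C, aeval_X, map_ofNat, map_inv₀]
    rw [div_eq_inv_mul]
  rw [map_add, map_mul, map_mul, aeval_C, aeval_C, aeval_X, aeval_comp, hx,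
    hpoly_eq_chebyshevW hp, ← eval_map_algebraMap, map_pow, map_neg,
    map_chebyshevW, map_chebyshevW]

end TwistedEquation

section Padic

variable {p : ℕ} [Fact p.Prime]

instance charP_residueField_padicInt : CharP (IsLocalRing.ResidueField ℤ_[p]) p :=
  charP_of_injective_ringHom (f := (PadicInt.residueField (p := p)).symm.toRingHom)
    PadicInt.residueField.symm.injective p

theorem valuation_eq_of_associated {x y : ℤ_[p]} (h : Associated x y) :
    x.valuation = y.valuation := by
  obtain ⟨u, rfl⟩ := h
  rcases eq_or_ne x 0 with rfl | hx
  · rw [zero_mul]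
  have hu : (u : ℤ_[p]).valuation + ((u⁻¹ : ℤ_[p]ˣ) : ℤ_[p]).valuation = 0 := by
    rw [← PadicInt.valuation_mul u.ne_zero u⁻¹.ne_zero, u.mul_inv, PadicInt.valuation_one]
  rw [PadicInt.valuation_mul hx u.ne_zero, (Nat.add_eq_zero_iff.1 hu).1, add_zero]

theorem valuation_eq_one_of_irreducible {x : ℤ_[p]} (hx : Irreducible x) : x.valuation = 1 := by
  rw [valuation_eq_of_associated
    (IsDiscreteValuationRing.associated_of_irreducible _ hx PadicInt.irreducible_p),
    PadicInt.valuation_p]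

theorem exists_irreducible_coe_eq {x : ℚ_[p]} (hx : x.valuation = 1) :
    ∃ ϖ : ℤ_[p], Irreducible ϖ ∧ (ϖ : ℚ_[p]) = x := by
  have hle : ‖x‖ ≤ 1 := (Padic.norm_le_one_iff_val_nonneg x).2 (hx ▸ zero_le_one)
  let ϖ : ℤ_[p] := ⟨x, hle⟩
  have hval : ϖ.valuation = 1 := by
    rw [← Nat.cast_inj (R := ℤ), ← PadicInt.valuation_coe, Nat.cast_one]
    exact hx
  have hϖ : ϖ ≠ 0 := fun h => by rw [h, PadicInt.valuation_zero] at hval; exact zero_ne_one hval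
  refine ⟨ϖ, ?_, rfl⟩
  rw [PadicInt.unitCoeff_spec hϖ, hval, pow_one, irreducible_units_mul]
  exact PadicInt.irreducible_p

theorem valuation_sq_div_pow_eq_one {z s : ℚ_[p]} (hz : z ≠ 0) (hs : s ≠ 0)
    (h : 2 * s.valuation = p * z.valuation + 1) : (s ^ 2 / z ^ p).valuation = 1 := by
  rw [div_eq_mul_inv, Padic.valuation_mul (pow_ne_zero _ hs) (inv_ne_zero (pow_ne_zero _ hz)),
    Padic.valuation_inv, Padic.valuation_pow, Padic.valuation_pow]
  push_cast
  linear_combination h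

theorem ne_two_and_ne_zero_of_two_mul_valuation_eq {z s : ℚ_[p]}
    (h : 2 * s.valuation = p * z.valuation + 1) : p ≠ 2 ∧ z ≠ 0 ∧ s ≠ 0 := by
  refine ⟨?_, ?_, ?_⟩
  · rintro rfl
    push_cast at h
    omega
  · rintro rfl
    rw [Padic.valuation_zero] at h
    omega
  · rintro rfl
    rw [Padic.valuation_zero] at h
    have hdvd : (p : ℤ) ∣ 1 := ⟨-z.valuation, by linear_combination -h⟩
    exact (Nat.prime_iff_prime_int.1 Fact.out).not_isUnit (isUnit_of_dvd_one hdvd)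

variable {E ι : Type*} [Field E] [Algebra ℚ_[p] E] [Algebra ℤ_[p] E] [IsScalarTower ℤ_[p] ℚ_[p] E]
  [Fintype ι] [DecidableEq ι]

theorem two_mul_valuation_discr_integralClosure (hp : p ≠ 2) {a : ℤ_[p]} (ha : Irreducible (a - 2))
    {y : E} (hy : aeval y (taylor 2 (Chebyshev.C ℤ_[p] p - C a)) = 0)
    (hgen : IntermediateField.adjoin ℚ_[p] {y} = ⊤)
    (b : Module.Basis ι ℤ_[p] (integralClosure ℤ_[p] E)) :
    2 * (Algebra.discr ℤ_[p] b).valuation = 3 * p - 1 := by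
  have hp_prime : p.Prime := Fact.out
  have hint : IsIntegral ℤ_[p] y :=
    ⟨_, monic_taylor (isMonicOfDegree_chebyshevC_sub_C ℤ_[p] hp_prime.ne_zero a).monic 2, hy⟩
  have htop : Algebra.adjoin ℚ_[p] {y} = ⊤ := by
    rw [← IntermediateField.adjoin_simple_toSubalgebra_of_isAlgebraic hint.tower_top.isAlgebraic,
      hgen, IntermediateField.top_toSubalgebra]
  let B := PowerBasis.ofAdjoinEqTop' hint.tower_top htop
  have hB : B.gen = y := PowerBasis.ofAdjoinEqTop'_gen _ _
  have : FiniteDimensional ℚ_[p] E := B.finite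
  have hval := valuation_eq_of_associated
    (associated_discr_sq_integralClosure hp ha B (hB.symm ▸ hy) b)
  have hpp : (p : ℤ_[p]) ≠ 0 := PadicInt.prime_p.ne_zero
  rw [PadicInt.valuation_pow, PadicInt.valuation_mul (pow_ne_zero _ hpp)
    (pow_ne_zero _ ha.ne_zero), PadicInt.valuation_pow, PadicInt.valuation_pow,
    PadicInt.valuation_p, valuation_eq_one_of_irreducible ha] at hval
  have := hp_prime.pos
  omega

end Padic

theorem stmt_10_general {r : ℕ} [Fact r.Prime] {z s : ℚ_[r]}
    (hzs : 2 * s.valuation = r * z.valuation + 1)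
    {E : Type*} [Field E] [Algebra ℚ_[r] E] [Algebra ℤ_[r] E] [IsScalarTower ℤ_[r] ℚ_[r] E]
    {γ₀ : E} (hγ : aeval γ₀ (C ((-z) ^ ((r - 1) / 2)) * X *
      ((hpoly r).map (Int.castRingHom ℚ_[r])).comp (C 2 - C z⁻¹ * X ^ 2) + C s) = 0)
    (hgen : IntermediateField.adjoin ℚ_[r] {γ₀} = ⊤)
    {ι : Type*} [Fintype ι] [DecidableEq ι]
    (b : Module.Basis ι ℤ_[r] (integralClosure ℤ_[r] E)) :
    ((Algebra.discr ℤ_[r] b).valuation : ℚ) = (3 * (r : ℚ) - 1) / 2 := by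
  obtain ⟨hr, hz, hs⟩ := ne_two_and_ne_zero_of_two_mul_valuation_eq hzs
  have hr_prime : r.Prime := Fact.out
  obtain ⟨n, rfl⟩ := hr_prime.odd_of_ne_two hr
  rw [show (2 * n + 1 - 1) / 2 = n by omega, aeval_mul_hpoly_comp_add hr_prime] at hγ
  obtain ⟨ϖ, hϖ, hϖ_eq⟩ := exists_irreducible_coe_eq (valuation_sq_div_pow_eq_one hz hs hzs)
  have hϖE : algebraMap ℤ_[2 * n + 1] E ϖ =
      algebraMap ℚ_[2 * n + 1] E s ^ 2 / algebraMap ℚ_[2 * n + 1] E z ^ (2 * n + 1) := by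
    rw [IsScalarTower.algebraMap_apply ℤ_[2 * n + 1] ℚ_[2 * n + 1] E, ← map_pow, ← map_pow,
      ← map_div₀, ← hϖ_eq, PadicInt.algebraMap_apply]
  have ha : Irreducible (2 - ϖ - 2) := by
    rw [sub_sub_cancel_left]
    exact (Associated.refl ϖ).neg_left.irreducible_iff.2 hϖ
  have hroot := aeval_taylor_chebyshevC_sub_C_eq_zero
    ((map_ne_zero (algebraMap ℚ_[2 * n + 1] E)).2 hz) hγ hϖE
  have hval := two_mul_valuation_discr_integralClosure hr ha (mod_cast hroot)
    (adjoin_neg_sq_div_eq_top hs hγ hgen) b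
  rw [eq_div_iff two_ne_zero, eq_sub_iff_add_eq]
  norm_cast
  omega

/-- **Proposition 5.20.** Let `r ≥ 5` be a prime and `z, s` nonzero integers with
`v_r(z) = 1` and `v_r(s) = (r+1)/2`.  Let `γ₀` be a root of `F(x)` and `E = ℚ_r(γ₀)` the
field generated by it over `ℚ_r`, and let `O` be the integral closure of `ℤ_r` in `E`.
Then the `r`-adic valuation of the discriminant of any `ℤ_r`-basis of `O` equals
`(3r - 1)/2`. -/
theorem stmt_10 (r : ℕ) [Fact r.Prime] (hr : 5 ≤ r)
    (z s : ℤ) (hz0 : z ≠ 0) (hs0 : s ≠ 0)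
    (hz : ((z : ℚ_[r])).valuation = 1)
    (hs : 2 * ((s : ℚ_[r])).valuation = (r : ℤ) + 1)
    (E : Type*) [Field E] [Algebra ℚ_[r] E] [Algebra ℤ_[r] E]
    [IsScalarTower ℤ_[r] ℚ_[r] E]
    (γ₀ : E) (hγ : aeval γ₀ (Fpoly r z s ℚ_[r]) = 0)
    (hgen : IntermediateField.adjoin ℚ_[r] {γ₀} = ⊤)
    (ι : Type*) [Fintype ι] [DecidableEq ι]
    (b : Module.Basis ι ℤ_[r] (integralClosure ℤ_[r] E)) :
    (((Algebra.discr ℤ_[r] ⇑b).valuation : ℚ)) = (3 * (r : ℚ) - 1) / 2 := by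
  refine stmt_10_general (z := z) (s := s) (by rw [hz, hs, mul_one]) ?_ hgen b
  simpa [Fpoly] using hγ
end

section
/- Let t₀ be a rational number with t₀ ≠ 0 and t₀ ≠ 1. Then the Weierstrass curve y² = x³ + 2x² + (1/t₀)·x over ℚ has nonzero discriminant (so it is an elliptic curve), and its j-invariant equals 64·(4t₀ − 3)³ / (t₀ − 1). In particular, if A, B, a, b are nonzero integers with Aa² + Bb^r ≠ 0 (r a positive integer) and t₀ = Aa²/(Aa² + Bb^r), the j-invariant equals −2⁶·(Aa² − 3Bb^r)³ / ((Aa² + Bb^r)²·Bb^r). -/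
lemma Δ_of_isCharNeTwoNF_of_a₆_eq_zero {R : Type*} [CommRing R] (W : WeierstrassCurve R)
    [W.IsCharNeTwoNF] (ha₆ : W.a₆ = 0) : W.Δ = 16 * W.a₄ ^ 2 * (W.a₂ ^ 2 - 4 * W.a₄) := by
  rw [W.Δ_of_isCharNeTwoNF, ha₆]
  ring

section DarmonCurve

variable {K : Type*} [Field K]

/-- Darmon's curve `C₂ : y² = x³ + 2x² + (1/t)x`, with a rational `2`-torsion point at the origin.
At `t = 0` the convention `1 / 0 = 0` makes it the singular curve `y² = x³ + 2x²`. -/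
def darmonCurve (t : K) : WeierstrassCurve K where
  a₁ := 0
  a₂ := 2
  a₃ := 0
  a₄ := 1 / t
  a₆ := 0

instance darmonCurve_isCharNeTwoNF (t : K) : (darmonCurve t).IsCharNeTwoNF := ⟨rfl, rfl⟩

variable {t u v : K}

lemma darmonCurve_c₄ (ht : t ≠ 0) : (darmonCurve t).c₄ = 16 * (4 * t - 3) / t := by
  calc (darmonCurve t).c₄ = 16 * 2 ^ 2 - 48 * (1 / t) := (darmonCurve t).c₄_of_isCharNeTwoNF
    _ = 16 * (4 * t - 3) / t := by field_simp; ring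

lemma darmonCurve_Δ (ht : t ≠ 0) : (darmonCurve t).Δ = 64 * (t - 1) / t ^ 3 := by
  calc (darmonCurve t).Δ = 16 * (1 / t) ^ 2 * (2 ^ 2 - 4 * (1 / t)) :=
        Δ_of_isCharNeTwoNF_of_a₆_eq_zero _ rfl
    _ = 64 * (t - 1) / t ^ 3 := by field_simp; ring

lemma darmonCurve_Δ_ne_zero (h2 : (2 : K) ≠ 0) (ht0 : t ≠ 0) (ht1 : t ≠ 1) :
    (darmonCurve t).Δ ≠ 0 := by
  have h64 : (64 : K) ≠ 0 := by
    rw [show (64 : K) = 2 ^ 6 by norm_num]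
    exact pow_ne_zero 6 h2
  rw [darmonCurve_Δ ht0]
  exact div_ne_zero (mul_ne_zero h64 (sub_ne_zero.mpr ht1)) (pow_ne_zero 3 ht0)

lemma darmonCurve_c₄_pow_three_div_Δ (h2 : (2 : K) ≠ 0) (ht0 : t ≠ 0) (ht1 : t ≠ 1) :
    (darmonCurve t).c₄ ^ 3 / (darmonCurve t).Δ = 64 * (4 * t - 3) ^ 3 / (t - 1) := by
  have ht1' : t - 1 ≠ 0 := sub_ne_zero.mpr ht1
  rw [div_eq_iff (darmonCurve_Δ_ne_zero h2 ht0 ht1), darmonCurve_c₄ ht0, darmonCurve_Δ ht0]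
  field_simp
  ring

lemma darmonCurve_div_add_c₄_pow_three_div_Δ (h2 : (2 : K) ≠ 0) (hu : u ≠ 0) (hv : v ≠ 0)
    (huv : u + v ≠ 0) :
    (darmonCurve (u / (u + v))).c₄ ^ 3 / (darmonCurve (u / (u + v))).Δ =
      -2 ^ 6 * (u - 3 * v) ^ 3 / ((u + v) ^ 2 * v) := by
  have h_sub_one : u / (u + v) - 1 = -v / (u + v) := by field_simp; ring
  have h_sub_three : 4 * (u / (u + v)) - 3 = (u - 3 * v) / (u + v) := by field_simp; ring
  have h_ne_one : u / (u + v) ≠ 1 := by simpa [div_eq_one_iff_eq huv] using hv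
  rw [darmonCurve_c₄_pow_three_div_Δ h2 (div_ne_zero hu huv) h_ne_one, h_sub_one, h_sub_three]
  field_simp
  ring

theorem stmt_11_general (h2 : (2 : K) ≠ 0) (ht0 : t ≠ 0) (ht1 : t ≠ 1) :
    (darmonCurve t).Δ ≠ 0 ∧
    (darmonCurve t).c₄ ^ 3 / (darmonCurve t).Δ = 64 * (4 * t - 3) ^ 3 / (t - 1) ∧
    ∀ u v : K, t = u / (u + v) →
      (darmonCurve t).c₄ ^ 3 / (darmonCurve t).Δ =
        -2 ^ 6 * (u - 3 * v) ^ 3 / ((u + v) ^ 2 * v) := by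
  refine ⟨darmonCurve_Δ_ne_zero h2 ht0 ht1, darmonCurve_c₄_pow_three_div_Δ h2 ht0 ht1, ?_⟩
  rintro u v rfl
  obtain ⟨hu, huv⟩ := div_ne_zero_iff.mp ht0
  have hv : v ≠ 0 := by
    rintro rfl
    exact ht1 (by rw [add_zero, div_self hu])
  exact darmonCurve_div_add_c₄_pow_three_div_Δ h2 hu hv huv

end DarmonCurve

/-- The computation in the proofs of Theorem 4.2 and Lemma 4.4: the Weierstrass curve
`y² = x³ + 2x² + (1/t₀)x` over `ℚ` (with `t₀ ≠ 0, 1`) has nonzero discriminant, its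
`j`-invariant (`c₄³/Δ`) equals `64(4t₀-3)³/(t₀-1)`, and when
`t₀ = Aa²/(Aa² + Bb^r)` this `j`-invariant equals `-2⁶(Aa²-3Bb^r)³/((Aa²+Bb^r)²·Bb^r)`. -/
theorem stmt_11 (t₀ : ℚ) (ht0 : t₀ ≠ 0) (ht1 : t₀ ≠ 1)
    (W : WeierstrassCurve ℚ)
    (hW : W = { a₁ := 0, a₂ := 2, a₃ := 0, a₄ := 1 / t₀, a₆ := 0 }) :
    W.Δ ≠ 0 ∧
    W.c₄ ^ 3 / W.Δ = 64 * (4 * t₀ - 3) ^ 3 / (t₀ - 1) ∧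
    ∀ (A B a b : ℤ) (r : ℕ), 0 < r → A ≠ 0 → B ≠ 0 → a ≠ 0 → b ≠ 0 →
      A * a ^ 2 + B * b ^ r ≠ 0 →
      t₀ = (A * a ^ 2 : ℚ) / ((A * a ^ 2 : ℚ) + (B * b ^ r : ℚ)) →
      W.c₄ ^ 3 / W.Δ =
        -2 ^ 6 * ((A * a ^ 2 : ℚ) - 3 * (B * b ^ r : ℚ)) ^ 3 /
          (((A * a ^ 2 : ℚ) + (B * b ^ r : ℚ)) ^ 2 * (B * b ^ r : ℚ)) := by
  subst hW
  obtain ⟨hΔ, hj, hj_div_add⟩ := stmt_11_general two_ne_zero ht0 ht1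
  exact ⟨hΔ, hj, fun _ _ _ _ _ _ _ _ _ _ _ ht => hj_div_add _ _ ht⟩
end

section
/- Let K = ℚ(√5). If (x, y) ∈ K × K satisfies −5y² = 2·(x² + x − 1)·(x² + (7/2)x + 27/8), then y = 0 and x² + x − 1 = 0, i.e. x = (−1 + √5)/2 or x = (−1 − √5)/2. -/
open IntermediateField

/-!
Sending the roots `(-1 + √5) / 2` and `(-1 - √5) / 2` of `x² + x - 1` to `0` and `∞` turns the
quartic into `E : y² = x (x² + 2 x + 5)`, so one has to see that `(0, 0)` is the only affine point
of `E` over `ℚ(√5)`. For a point `P` with conjugate `P'`, the sums `P + P'` and `P - P'` come from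
rational points of `E` and of its twist by `5`; if those are trivial, then `P` is `2`-torsion,
hence `(0, 0)`. For the twists of `E` by powers of `5` the rational points are found by Fermat's
infinite descent: `p² + 2pq + 5q² = (p + q)² + (2q)²` makes a point into a Pythagorean triple, whose
parametrization yields a second Pythagorean-type equation and from it a smaller point.
-/

section Coprime

theorem exists_eq_pow_of_coprime_of_mul_eq_pow {A B c n : ℕ} (hn : n ≠ 0) (hAB : A.Coprime B)
    (h : A * B = c ^ n) : ∃ a b, a * b = c ∧ A = a ^ n ∧ B = b ^ n := by
  obtain ⟨a, rfl⟩ := exists_eq_pow_of_mul_eq_pow (Nat.isUnit_iff.2 hAB) h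
  obtain ⟨b, rfl⟩ :=
    exists_eq_pow_of_mul_eq_pow (Nat.isUnit_iff.2 hAB.symm) ((mul_comm _ _).trans h)
  exact ⟨a, b, Nat.pow_left_injective hn (by simpa only [mul_pow] using h), rfl, rfl⟩

theorem exists_eq_pow_of_not_dvd_of_mul_eq_prime_pow_mul_pow {p j A B c n : ℕ} (hp : p.Prime)
    (hn : n ≠ 0) (hpA : ¬ p ∣ A) (hAB : A.Coprime B) (h : A * B = p ^ j * c ^ n) :
    ∃ a b, a * b = c ∧ A = a ^ n ∧ B = p ^ j * b ^ n := by
  obtain ⟨B, rfl⟩ : p ^ j ∣ B :=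
    (((hp.coprime_iff_not_dvd).2 hpA).pow_left j).dvd_of_dvd_mul_left (h ▸ dvd_mul_right _ _)
  rw [mul_left_comm, mul_right_inj' (pow_ne_zero j hp.ne_zero)] at h
  obtain ⟨a, b, hab, rfl, rfl⟩ :=
    exists_eq_pow_of_coprime_of_mul_eq_pow hn hAB.coprime_mul_left_right h
  exact ⟨a, b, hab, rfl, rfl⟩

theorem exists_eq_pow_of_coprime_of_mul_eq_prime_pow_mul_pow {p j A B c n : ℕ} (hp : p.Prime)
    (hn : n ≠ 0) (hAB : A.Coprime B) (h : A * B = p ^ j * c ^ n) :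
    ∃ a b, a * b = c ∧ (A = a ^ n ∧ B = p ^ j * b ^ n ∨ A = p ^ j * a ^ n ∧ B = b ^ n) := by
  by_cases hpA : p ∣ A
  · have hpB : ¬ p ∣ B := fun hpB => Nat.not_coprime_of_dvd_of_dvd hp.one_lt hpA hpB hAB
    obtain ⟨b, a, hba, hB, hA⟩ := exists_eq_pow_of_not_dvd_of_mul_eq_prime_pow_mul_pow hp hn hpB
      hAB.symm ((mul_comm _ _).trans h)
    exact ⟨a, b, (mul_comm _ _).trans hba, Or.inr ⟨hA, hB⟩⟩
  · obtain ⟨a, b, hab, hfac⟩ :=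
      exists_eq_pow_of_not_dvd_of_mul_eq_prime_pow_mul_pow hp hn hpA hAB h
    exact ⟨a, b, hab, Or.inl hfac⟩

theorem exists_eq_prime_pow_mul_sq {p j n : ℕ} (hp : p.Prime) (h : IsSquare (p ^ j * n)) :
    ∃ i c, n = p ^ i * c ^ 2 := by
  rcases eq_or_ne n 0 with rfl | hn
  · exact ⟨0, 0, by simp⟩
  obtain ⟨i, m, hpm, rfl⟩ := Nat.exists_eq_pow_mul_and_not_dvd hn p hp.ne_one
  obtain ⟨r, hr⟩ := h
  have hcop : (p ^ (j + i)).Coprime m := ((hp.coprime_iff_not_dvd).2 hpm).pow_left _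
  obtain ⟨-, c, -, -, rfl⟩ :=
    exists_eq_pow_of_coprime_of_mul_eq_pow (c := r) two_ne_zero hcop (by rw [sq, ← hr]; ring)
  exact ⟨i, c, rfl⟩

-- The factors are `(w - M) / 2` and `(w + M) / 2`.
theorem exists_coprime_mul_eq_of_sq_add_four_mul_sq_eq_sq {d M v w : ℕ} (hd : Squarefree d)
    (hwv : w.Coprime v) (h : M ^ 2 + 4 * d * v ^ 2 = w ^ 2) :
    ∃ A B, A.Coprime B ∧ A * B = d * v ^ 2 ∧ A + B = w := by
  obtain ⟨t, rfl⟩ : ∃ t, w = M + t := Nat.exists_eq_add_of_le (by nlinarith)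
  have heven : Even t := by
    have ht : t * (2 * M + t) = 2 * (2 * d * v ^ 2) := by linarith
    simpa [parity_simps] using congrArg Even ht
  obtain ⟨A, rfl⟩ := heven.exists_two_nsmul
  simp only [smul_eq_mul] at h hwv ⊢
  have hprod : A * (A + M) = d * v ^ 2 := by linarith
  refine ⟨A, A + M, Nat.coprime_of_dvd fun l hl hA hB => ?_, hprod, by ring⟩
  have hlv : ¬ l ∣ v := fun hlv =>
    Nat.not_coprime_of_dvd_of_dvd hl.one_lt
      ((dvd_add hA hB).trans (dvd_of_eq (by ring))) hlv hwv
  have hlsq : l * l ∣ d :=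
    Nat.Coprime.dvd_of_dvd_mul_right
      (sq l ▸ ((hl.coprime_iff_not_dvd).2 hlv).pow 2 2) (hprod ▸ mul_dvd_mul hA hB)
  exact hl.one_lt.ne' (Nat.isUnit_iff.1 (hd l hlsq))

end Coprime

/-- The binary quadratic form `p² + 2pq + 5q²`, i.e. the factor `x² + 2x + 5` of the cubic
`x (x² + 2x + 5)` at `x = p / q` with denominators cleared. -/
def quadFactor (p q : ℕ) : ℕ := p ^ 2 + 2 * p * q + 5 * q ^ 2

theorem quadFactor_five_mul (p q : ℕ) : quadFactor (5 * p) q = 5 * quadFactor q p := by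
  unfold quadFactor
  ring

theorem coprime_quadFactor_left {p q : ℕ} (hpq : p.Coprime q) (hp : ¬ 5 ∣ p) :
    p.Coprime (quadFactor p q) := by
  have h5 : p.Coprime 5 := ((Nat.Prime.coprime_iff_not_dvd Nat.prime_five).2 hp).symm
  rw [show quadFactor p q = 5 * q ^ 2 + p * (p + 2 * q) by unfold quadFactor; ring,
    Nat.coprime_add_mul_left_right]
  exact h5.mul_right (hpq.pow_right 2)

theorem coprime_quadFactor_right {p q : ℕ} (hpq : p.Coprime q) : q.Coprime (quadFactor p q) := by
  rw [show quadFactor p q = p ^ 2 + q * (2 * p + 5 * q) by unfold quadFactor; ring,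
    Nat.coprime_add_mul_left_right]
  exact hpq.symm.pow_right 2

-- `-2` is not a square modulo `5`.
theorem five_dvd_of_five_dvd_quadFactor_sq {a b : ℕ} (h : 5 ∣ quadFactor (a ^ 2) (b ^ 2)) :
    5 ∣ a := by
  have key : ∀ a b : ZMod 5, (a ^ 2) ^ 2 + 2 * a ^ 2 * b ^ 2 + 5 * (b ^ 2) ^ 2 = 0 → a = 0 := by
    decide
  rw [← ZMod.natCast_eq_zero_iff] at h ⊢
  exact key a b (by simpa [quadFactor] using h)

theorem not_isSquare_quadFactor_of_modEq_one {p q : ℕ} (hp : p ≡ 1 [MOD 4]) (hq : q ≡ 1 [MOD 4]) :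
    ¬ IsSquare (quadFactor p q) := by
  rintro ⟨r, hr⟩
  have hmod : quadFactor p q % 16 = 8 := by
    obtain ⟨a, rfl⟩ : ∃ a, p = 4 * a + 1 := ⟨p / 4, by unfold Nat.ModEq at hp; omega⟩
    obtain ⟨b, rfl⟩ : ∃ b, q = 4 * b + 1 := ⟨q / 4, by unfold Nat.ModEq at hq; omega⟩
    have hform : quadFactor (4 * a + 1) (4 * b + 1) =
        16 * (a ^ 2 + a + 2 * a * b + 5 * b ^ 2 + 3 * b) + 8 := by
      unfold quadFactor
      ring
    omega
  have hsq : ∀ z : ZMod 16, z * z ≠ 8 := by decide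
  refine hsq r ?_
  have hcast := congrArg (Nat.cast : ℕ → ZMod 16) hr
  rw [← ZMod.natCast_mod, hmod] at hcast
  exact_mod_cast hcast.symm

section Descent

variable {M m n e j : ℕ}

theorem sq_modEq_one_of_odd (h : Odd n) : n ^ 2 ≡ 1 [MOD 4] := by
  obtain ⟨k, rfl⟩ := h
  exact (Nat.modEq_of_dvd ⟨-(k ^ 2 + k : ℤ), by push_cast; ring⟩)

theorem odd_five_pow : Odd (5 ^ j) := Odd.pow (by decide)

theorem odd_add_of_isSquare_quadFactor (hMe : M.Coprime e)
    (h : IsSquare (quadFactor (M ^ 2) (5 ^ j * e ^ 2))) : Odd (M ^ 2 + 5 ^ j * e ^ 2) := by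
  by_contra hodd
  have hiff : Even M ↔ Even e := by
    have := odd_five_pow (j := j)
    simpa [Nat.odd_add, parity_simps, this, ← Nat.not_even_iff_odd, not_iff_not] using hodd
  by_cases hM : Even M
  · exact Nat.not_coprime_of_dvd_of_dvd one_lt_two hM.two_dvd (hiff.1 hM).two_dvd hMe
  · have he : Odd e := Nat.not_even_iff_odd.1 (mt hiff.2 hM)
    have hpow : 5 ^ j ≡ 1 [MOD 4] := by simpa using Nat.ModEq.pow j (show 5 ≡ 1 [MOD 4] by rfl)
    exact not_isSquare_quadFactor_of_modEq_one (sq_modEq_one_of_odd (Nat.not_even_iff_odd.1 hM))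
      (hpow.mul (sq_modEq_one_of_odd he)) h

-- `p² + 2pq + 5q² = (p + q)² + (2q)²`, and `m`, `n` parametrize this Pythagorean triple.
theorem exists_mul_eq_of_isSquare_quadFactor {p q : ℕ} (hpq : p.Coprime q) (hq : 0 < q)
    (hodd : Odd (p + q)) (h : IsSquare (quadFactor p q)) :
    ∃ m n, m.Coprime n ∧ Odd (m + n) ∧ m * n = q ∧ p + m * n + n ^ 2 = m ^ 2 := by
  obtain ⟨r, hr⟩ := h
  have hr0 : 0 < r := Nat.pos_of_ne_zero fun hr0 => by simp [hr0, quadFactor, hq.ne'] at hr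
  have htriple : PythagoreanTriple (p + q : ℕ) (2 * q : ℕ) r := by
    unfold PythagoreanTriple
    exact_mod_cast (show _ = r * r by rw [← hr]; unfold quadFactor; ring)
  have hcop : (p + q).Coprime (2 * q) :=
    (Nat.coprime_two_right.2 hodd).mul_right (Nat.coprime_add_self_left.2 hpq)
  obtain ⟨m, n, hp, hmn, -, hgcd, hpar, hm⟩ := htriple.coprime_classification'
    (by rwa [Int.gcd_natCast_natCast]) (by exact_mod_cast Nat.odd_iff.1 hodd)
    (by exact_mod_cast hr0)
  push_cast at hp hmn
  have hmul : m * n = q := by linarith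
  have hn : 0 ≤ n := (pos_of_mul_pos_right (by rw [hmul]; exact_mod_cast hq) hm).le
  lift m to ℕ using hm
  lift n to ℕ using hn
  refine ⟨m, n, by rwa [Int.gcd_natCast_natCast] at hgcd, Nat.odd_iff.2 (by omega),
    by exact_mod_cast hmul, ?_⟩
  zify
  linarith

theorem even_right_of_mul_eq_five_pow_mul_sq (hmn : Odd (m + n)) (he : m * n = 5 ^ j * e ^ 2)
    (h : M ^ 2 + m * n + n ^ 2 = m ^ 2) : Even n := by
  by_contra hn
  have hm : Even m := Nat.not_odd_iff_even.1 (mt (Nat.odd_add.1 hmn).1 hn)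
  have he2 : Even e := by
    have := congrArg Even he
    simpa [parity_simps, hm, Nat.not_even_iff_odd.2 (odd_five_pow (j := j))] using this
  have hdvd : 4 ∣ m * n := he ▸ (pow_dvd_pow_of_dvd he2.two_dvd 2).mul_left _
  have hcop : Nat.Coprime 4 n :=
    (Nat.coprime_two_left.2 (Nat.not_even_iff_odd.1 hn)).pow_left 2
  obtain ⟨m', rfl⟩ : 4 ∣ m := hcop.dvd_of_dvd_mul_right hdvd
  have hmod : ∀ M m' n : ZMod 4, M ^ 2 + 4 * m' * n + n ^ 2 = (4 * m') ^ 2 → 2 * n = 0 := by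
    decide
  have h2n : (2 * n : ZMod 4) = 0 := hmod M m' n (by exact_mod_cast congrArg Nat.cast h)
  have hdvd2 : 4 ∣ 2 * n := (ZMod.natCast_eq_zero_iff _ _).1 (by exact_mod_cast h2n)
  exact hn (even_iff_two_dvd.2 (by omega))

theorem exists_quadFactor_eq_of_sq_add_mul_add_sq_eq {u : ℕ} (hc : m.Coprime (5 ^ j * (2 * u) ^ 2))
    (h : M ^ 2 + m * (5 ^ j * (2 * u) ^ 2) + (5 ^ j * (2 * u) ^ 2) ^ 2 = m ^ 2) :
    ∃ a b, a * b = u ∧ a.Coprime (5 ^ j * b) ∧ quadFactor (a ^ 2) (5 ^ j * b ^ 2) = m := by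
  obtain ⟨v, hv⟩ : ∃ v, v = 5 ^ j * u ^ 2 := ⟨_, rfl⟩
  rw [show 5 ^ j * (2 * u) ^ 2 = 4 * v by rw [hv]; ring] at h hc
  obtain ⟨w, rfl⟩ : ∃ w, m = 2 * v + w := Nat.exists_eq_add_of_le (by nlinarith)
  have hwv : w.Coprime v := by simpa using hc.coprime_mul_left_right
  obtain ⟨A, B, hAB, hmul, hadd⟩ := exists_coprime_mul_eq_of_sq_add_four_mul_sq_eq_sq (M := M)
    Nat.prime_five.prime.squarefree hwv (by linarith)
  have key : ∀ a b : ℕ, a * b = u → (a ^ 4).Coprime (5 ^ (2 * j + 1) * b ^ 4) →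
      a ^ 4 + 5 ^ (2 * j + 1) * b ^ 4 = w →
      a.Coprime (5 ^ j * b) ∧ quadFactor (a ^ 2) (5 ^ j * b ^ 2) = 2 * v + w := by
    rintro a b rfl hcop rfl
    refine ⟨(hcop.coprime_dvd_left (dvd_pow_self a four_ne_zero)).coprime_dvd_right
      ⟨5 ^ (j + 1) * b ^ 3, by ring⟩, ?_⟩
    rw [hv]
    unfold quadFactor
    ring
  obtain ⟨a, b, hab, ⟨rfl, rfl⟩ | ⟨rfl, rfl⟩⟩ :=
    exists_eq_pow_of_coprime_of_mul_eq_prime_pow_mul_pow (j := 2 * j + 1) Nat.prime_five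
      four_ne_zero hAB (c := u) (by rw [hmul, hv]; ring)
  · exact ⟨a, b, hab, key a b hab hAB hadd⟩
  · have hba : b * a = u := (mul_comm b a).trans hab
    exact ⟨b, a, hba, key b a hba hAB.symm ((add_comm _ _).trans hadd)⟩

theorem exists_eq_sq_and_eq_five_pow_mul_sq (hmn : m.Coprime n) (hn : Even n)
    (he : m * n = 5 ^ j * e ^ 2) (h : M ^ 2 + m * n + n ^ 2 = m ^ 2) :
    ∃ r t, r * t = e ∧ m = r ^ 2 ∧ n = 5 ^ j * t ^ 2 := by
  obtain ⟨r, t, hrt, hfac | ⟨rfl, rfl⟩⟩ :=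
    exists_eq_pow_of_coprime_of_mul_eq_prime_pow_mul_pow Nat.prime_five two_ne_zero hmn he
  · exact ⟨r, t, hrt, hfac⟩
  rcases Nat.eq_zero_or_pos j with rfl | hj
  · exact ⟨r, t, hrt, by simp⟩
  exfalso
  obtain ⟨u, rfl⟩ : 2 ∣ t := Nat.prime_two.dvd_of_dvd_pow hn.two_dvd
  obtain ⟨a, b, rfl, -, hab⟩ := exists_quadFactor_eq_of_sq_add_mul_add_sq_eq (j := 0) (u := u)
    (by simpa using hmn) (by simpa using h)
  have h5m : 5 ∣ 5 ^ j * r ^ 2 := (dvd_pow_self 5 hj.ne').mul_right _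
  have h5a : 5 ∣ a := by
    rw [← hab, pow_zero, one_mul] at h5m
    exact five_dvd_of_five_dvd_quadFactor_sq h5m
  have h5n : 5 ∣ (2 * (a * b)) ^ 2 :=
    ((h5a.mul_right b).mul_left 2).trans (dvd_pow_self _ two_ne_zero)
  exact Nat.not_coprime_of_dvd_of_dvd (by norm_num) h5m h5n hmn

theorem exists_lt_isSquare_quadFactor (he : 0 < e) (hMe : M.Coprime (5 ^ j * e))
    (h : IsSquare (quadFactor (M ^ 2) (5 ^ j * e ^ 2))) :
    ∃ a b, 0 < b ∧ b < e ∧ a.Coprime (5 ^ j * b) ∧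
      IsSquare (quadFactor (a ^ 2) (5 ^ j * b ^ 2)) := by
  have hM5 : M.Coprime (5 ^ j) := hMe.coprime_mul_right_right
  have hMe' : M.Coprime e := hMe.coprime_mul_left_right
  obtain ⟨m, n, hmn, hodd, hmul, hsq⟩ := exists_mul_eq_of_isSquare_quadFactor
    ((hM5.mul_right (hMe'.pow_right 2)).pow_left 2) (by positivity)
    (odd_add_of_isSquare_quadFactor hMe' h) h
  have hn : Even n := even_right_of_mul_eq_five_pow_mul_sq hodd hmul hsq
  obtain ⟨r, t, rfl, rfl, rfl⟩ := exists_eq_sq_and_eq_five_pow_mul_sq hmn hn hmul hsq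
  have ht : Even t := by
    simpa [parity_simps, Nat.not_even_iff_odd.2 (odd_five_pow (j := j))] using hn
  obtain ⟨u, rfl⟩ := ht.two_dvd
  obtain ⟨a, b, rfl, hcop, hr⟩ := exists_quadFactor_eq_of_sq_add_mul_add_sq_eq hmn hsq
  have hr0 : 0 < r := pos_of_mul_pos_left he (Nat.zero_le _)
  have hab : 0 < a * b := by
    simpa using pos_of_mul_pos_right he (Nat.zero_le r)
  have ha : 0 < a := pos_of_mul_pos_left hab (Nat.zero_le _)
  have hb : 0 < b := pos_of_mul_pos_right hab (Nat.zero_le _)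
  refine ⟨a, b, hb, ?_, hcop, r, by rw [hr, sq]⟩
  nlinarith [Nat.mul_le_mul hr0 ha]

theorem not_isSquare_quadFactor_sq (he : 0 < e) (hMe : M.Coprime (5 ^ j * e)) :
    ¬ IsSquare (quadFactor (M ^ 2) (5 ^ j * e ^ 2)) := by
  induction e using Nat.strong_induction_on generalizing M with
  | _ e ih =>
    intro h
    obtain ⟨a, b, hb, hbe, hcop, hab⟩ := exists_lt_isSquare_quadFactor he hMe h
    exact ih b hbe hb hcop hab

end Descent

section RationalPoints

variable {p q j : ℕ}

theorem mul_quadFactor_ne_five_pow_mul_sq {z : ℕ} (hq : 0 < q) (hpq : p.Coprime q) (hp : ¬ 5 ∣ p) :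
    p * q * quadFactor p q ≠ 5 ^ j * z ^ 2 := by
  intro h
  obtain ⟨M, w, -, rfl, hw⟩ := exists_eq_pow_of_not_dvd_of_mul_eq_prime_pow_mul_pow Nat.prime_five
    two_ne_zero hp (hpq.mul_right (coprime_quadFactor_left hpq hp)) ((mul_assoc _ _ _).symm.trans h)
  have hM5 : ¬ 5 ∣ M := fun hM => hp (hM.trans (dvd_pow_self M two_ne_zero))
  obtain ⟨e, N, -, hfac⟩ := exists_eq_pow_of_coprime_of_mul_eq_prime_pow_mul_pow
    Nat.prime_five two_ne_zero (coprime_quadFactor_right hpq) hw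
  obtain ⟨rfl, hN⟩ : q = 5 ^ j * e ^ 2 ∧ quadFactor (M ^ 2) q = N ^ 2 := by
    rcases hfac with ⟨rfl, hN⟩ | hfac
    · rcases eq_or_ne j 0 with rfl | hj
      · exact ⟨by simp, by simpa using hN⟩
      · exact absurd (five_dvd_of_five_dvd_quadFactor_sq (hN ▸ (dvd_pow_self 5 hj).mul_right _)) hM5
    · exact hfac
  have he : 0 < e := Nat.pos_of_ne_zero fun he => by simp [he] at hq
  have hMe : M.Coprime (5 ^ j * e) :=
    (hpq.coprime_dvd_left (dvd_pow_self M two_ne_zero)).coprime_dvd_right ⟨e, by ring⟩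
  exact not_isSquare_quadFactor_sq he hMe ⟨N, by rw [hN, sq]⟩

theorem not_isSquare_five_pow_mul_mul_quadFactor (hp : 0 < p) (hq : 0 < q) (hpq : p.Coprime q) :
    ¬ IsSquare (5 ^ j * (p * q * quadFactor p q)) := by
  intro h
  by_cases h5 : 5 ∣ p
  · obtain ⟨r, rfl⟩ := h5
    have hq5 : ¬ 5 ∣ q := fun hq5 =>
      Nat.not_coprime_of_dvd_of_dvd (by norm_num) (dvd_mul_right 5 r) hq5 hpq
    rw [quadFactor_five_mul, show 5 ^ j * (5 * r * q * (5 * quadFactor q r)) =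
      5 ^ (j + 2) * (q * r * quadFactor q r) by ring] at h
    obtain ⟨i, z, hz⟩ := exists_eq_prime_pow_mul_sq Nat.prime_five h
    exact mul_quadFactor_ne_five_pow_mul_sq (by omega) hpq.symm.coprime_mul_left_right hq5 hz
  · obtain ⟨i, z, hz⟩ := exists_eq_prime_pow_mul_sq Nat.prime_five h
    exact mul_quadFactor_ne_five_pow_mul_sq hq hpq h5 hz

theorem eq_zero_of_five_pow_mul_sq_eq {x y : ℚ} (h : 5 ^ j * y ^ 2 = x * (x ^ 2 + 2 * x + 5)) :
    x = 0 := by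
  by_contra hx
  have hquad : 0 < x ^ 2 + 2 * x + 5 := by linarith [sq_nonneg (x + 1)]
  have hx0 : 0 ≤ x := nonneg_of_mul_nonneg_left (h ▸ by positivity) hquad
  lift x to ℚ≥0 using hx0
  have hnum : 0 < x.num := NNRat.num_pos.2 (pos_iff_ne_zero.2 (by exact_mod_cast hx))
  refine not_isSquare_five_pow_mul_mul_quadFactor (j := j) hnum x.den_pos x.coprime_num_den
    (Rat.isSquare_natCast_iff.1 ⟨5 ^ j * y * x.den ^ 2, ?_⟩)
  have hden : (x.den : ℚ) ≠ 0 := by exact_mod_cast x.den_ne_zero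
  have hxq : (x : ℚ) = x.num / x.den := NNRat.cast_def x
  calc ((5 ^ j * (x.num * x.den * quadFactor x.num x.den) : ℕ) : ℚ)
      = 5 ^ j * x.den ^ 4 * (x * ((x : ℚ) ^ 2 + 2 * x + 5)) := by
        rw [hxq]
        unfold quadFactor
        push_cast
        field_simp
    _ = 5 ^ j * y * x.den ^ 2 * (5 ^ j * y * x.den ^ 2) := by
        rw [← h]
        ring

end RationalPoints

section QuadraticExtension

variable {F L : Type*} [Field F] [Field L] [Algebra F L] {d : F} {s : L}

theorem exists_eq_add_mul_of_mem_adjoin_sqrt (hs : s ^ 2 = algebraMap F L d) {z : L}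
    (hz : z ∈ F⟮s⟯) : ∃ a b, z = algebraMap F L a + algebraMap F L b * s := by
  have halg : IsAlgebraic F s := (hs ▸ isAlgebraic_algebraMap d).of_pow two_pos
  rw [← mem_toSubalgebra, adjoin_simple_toSubalgebra_of_isAlgebraic halg] at hz
  induction hz using Algebra.adjoin_induction with
  | mem z hz =>
    obtain rfl := Set.mem_singleton_iff.1 hz
    exact ⟨0, 1, by simp⟩
  | algebraMap a => exact ⟨a, 0, by simp⟩
  | add z w _ _ hz hw =>
    obtain ⟨a, b, rfl⟩ := hz
    obtain ⟨a', b', rfl⟩ := hw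
    exact ⟨a + a', b + b', by simp only [map_add]; ring⟩
  | mul z w _ _ hz hw =>
    obtain ⟨a, b, rfl⟩ := hz
    obtain ⟨a', b', rfl⟩ := hw
    refine ⟨a * a' + d * b * b', a * b' + b * a', ?_⟩
    simp only [map_add, map_mul, ← hs]
    ring

theorem add_mul_sqrt_inj (hs : s ^ 2 = algebraMap F L d) (hd : ¬ IsSquare d) {a b a' b' : F}
    (h : algebraMap F L a + algebraMap F L b * s = algebraMap F L a' + algebraMap F L b' * s) :
    a = a' ∧ b = b' := by
  have hinj := FaithfulSMul.algebraMap_injective F L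
  have hb : b = b' := by
    by_contra hne
    have hne' : b - b' ≠ 0 := sub_ne_zero.2 hne
    refine hd ⟨(a' - a) / (b - b'), hinj ?_⟩
    have hsub : algebraMap F L (b - b') ≠ 0 := (map_ne_zero _).2 hne'
    have hs' : s = algebraMap F L ((a' - a) / (b - b')) := by
      rw [map_div₀, eq_div_iff hsub, map_sub, map_sub]
      linear_combination h
    rw [← hs, map_mul, ← hs', sq]
  subst hb
  exact ⟨hinj (add_right_cancel h), rfl⟩

variable {A B : F}

-- The line through `(a + b√d, c + e√d)` and its conjugate has slope `e / b` and meets the cubic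
-- in a third, `F`-rational point.
theorem sq_eq_of_conj_add {a b c e : F} (hb : b ≠ 0)
    (hcurve : ∀ x y : F, y ^ 2 = x * (x ^ 2 + A * x + B) → x = 0)
    (hre : c ^ 2 + d * e ^ 2 =
      a ^ 3 + 3 * d * a * b ^ 2 + A * (a ^ 2 + d * b ^ 2) + B * a)
    (him : 2 * c * e = b * (3 * a ^ 2 + d * b ^ 2 + 2 * A * a + B)) :
    e ^ 2 = (A + 2 * a) * b ^ 2 := by
  obtain ⟨l, rfl⟩ : ∃ l, e = l * b := ⟨e / b, by field_simp⟩
  have hslope : 2 * c * l = 3 * a ^ 2 + d * b ^ 2 + 2 * A * a + B :=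
    mul_left_cancel₀ hb (by linear_combination him)
  have hx := hcurve (l ^ 2 - A - 2 * a) (c + l * (l ^ 2 - A - 2 * a - a))
    (by linear_combination hre + (l ^ 2 - A - 2 * a - a) * hslope)
  linear_combination b ^ 2 * hx

-- The line through `(a + b√d, c + e√d)` and the negative of its conjugate has slope `c / (b√d)`:
-- its third point is `F`-rational on the twist by `d`.
theorem sq_eq_of_conj_sub {a b c e : F} (hd : d ≠ 0) (hb : b ≠ 0)
    (htwist : ∀ x y : F, d * y ^ 2 = x * (x ^ 2 + A * x + B) → x = 0)
    (hre : c ^ 2 + d * e ^ 2 =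
      a ^ 3 + 3 * d * a * b ^ 2 + A * (a ^ 2 + d * b ^ 2) + B * a)
    (him : 2 * c * e = b * (3 * a ^ 2 + d * b ^ 2 + 2 * A * a + B)) :
    c ^ 2 = d * ((A + 2 * a) * b ^ 2) := by
  obtain ⟨l, rfl⟩ : ∃ l, c = l * (d * b) := ⟨c / (d * b), by field_simp⟩
  have hslope : 2 * d * e * l = 3 * a ^ 2 + d * b ^ 2 + 2 * A * a + B :=
    mul_left_cancel₀ hb (by linear_combination him)
  have hx := htwist (d * l ^ 2 - A - 2 * a) (e + l * (d * l ^ 2 - A - 2 * a - a))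
    (by linear_combination hre + (d * l ^ 2 - A - 2 * a - a) * hslope)
  linear_combination d * b ^ 2 * hx

theorem eq_zero_of_sq_eq_of_mem_adjoin_sqrt (h2 : (2 : F) ≠ 0) (hs : s ^ 2 = algebraMap F L d)
    (hd : ¬ IsSquare d)
    (hcurve : ∀ x y : F, y ^ 2 = x * (x ^ 2 + A * x + B) → x = 0)
    (htwist : ∀ x y : F, d * y ^ 2 = x * (x ^ 2 + A * x + B) → x = 0)
    {x y : L} (hx : x ∈ F⟮s⟯) (hy : y ∈ F⟮s⟯)
    (hroot : x ^ 2 + algebraMap F L A * x + algebraMap F L B ≠ 0)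
    (h : y ^ 2 = x * (x ^ 2 + algebraMap F L A * x + algebraMap F L B)) : x = 0 := by
  obtain ⟨a, b, hab⟩ := exists_eq_add_mul_of_mem_adjoin_sqrt hs hx
  obtain ⟨c, e, hce⟩ := exists_eq_add_mul_of_mem_adjoin_sqrt hs hy
  obtain ⟨hre, him⟩ : c ^ 2 + d * e ^ 2 =
        a ^ 3 + 3 * d * a * b ^ 2 + A * (a ^ 2 + d * b ^ 2) + B * a ∧
      2 * c * e = b * (3 * a ^ 2 + d * b ^ 2 + 2 * A * a + B) := by
    refine add_mul_sqrt_inj hs hd ?_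
    rw [hab, hce] at h
    simp only [map_add, map_mul, map_pow, map_ofNat, ← hs]
    linear_combination h
  have hsq_eq_zero : ∀ {u v : F}, u ^ 2 = d * v ^ 2 → v = 0 := fun {u v} huv => by
    by_contra hv
    exact hd ⟨u / v, by field_simp; exact huv.symm⟩
  rcases eq_or_ne b 0 with rfl | hb
  · have hce0 : c = 0 ∨ e = 0 := by simpa [h2] using him
    have ha : a = 0 := by
      rcases hce0 with rfl | rfl
      · exact htwist a e (by linear_combination hre)
      · exact hcurve a c (by linear_combination hre)
    simp [hab, ha]
  · have hd0 : d ≠ 0 := by rintro rfl; simp at hd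
    have hadd := sq_eq_of_conj_add hb hcurve hre him
    have hsub := sq_eq_of_conj_sub hd0 hb htwist hre him
    have he : e = 0 := hsq_eq_zero (hsub.trans (by rw [hadd]))
    have hc : c = 0 := by
      rw [← hadd, he] at hsub
      simpa using hsub
    have hy0 : y = 0 := by simp [hce, hc, he]
    rw [hy0, zero_pow two_ne_zero, eq_comm] at h
    exact (mul_eq_zero.1 h).resolve_right hroot

end QuadraticExtension

section Quartic

variable {K : Type*} [Field K] [CharZero K] {s x y : K}

/-- The `x`-coordinate of the map from the quartic to the cubic `y² = x (x² + 2 x + 5)`, for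
`s² = 5`: the Möbius map that sends the roots `(-1 + s) / 2` and `(-1 - s) / 2` of `x² + x - 1` to
`0` and `∞`, with leading coefficient `s (2 - s)` chosen to make the cubic rational and monic. -/
def cubicCoord (s x : K) : K := s * (2 - s) * (2 * x + 1 - s) / (2 * x + 1 + s)

theorem sq_eq_cubicCoord_of_quartic (hs : s ^ 2 = 5) (hx : 2 * x + 1 + s ≠ 0)
    (h : -5 * y ^ 2 = 2 * (x ^ 2 + x - 1) * (x ^ 2 + (7 / 2) * x + 27 / 8)) :
    (40 * (s - 2) * y / (2 * x + 1 + s) ^ 2) ^ 2 =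
      cubicCoord s x * (cubicCoord s x ^ 2 + 2 * cubicCoord s x + 5) := by
  obtain ⟨n, hn⟩ : ∃ n, n = 2 * x + 1 - s := ⟨_, rfl⟩
  obtain ⟨m, hm⟩ : ∃ m, m = 2 * x + 1 + s := ⟨_, rfl⟩
  have hlinear : 4 * (x ^ 2 + x - 1) = n * m := by
    rw [hn, hm]
    linear_combination hs
  have hquadratic : 4 * (8 * x ^ 2 + 28 * x + 27) =
      (5 - 2 * s) * n ^ 2 - 2 * n * m + (5 + 2 * s) * m ^ 2 := by
    rw [hn, hm]
    linear_combination -(16 * x + 20) * hs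
  have hy : -320 * y ^ 2 =
      n * m * ((5 - 2 * s) * n ^ 2 - 2 * n * m + (5 + 2 * s) * m ^ 2) := by
    rw [← hlinear, ← hquadratic]
    linear_combination 64 * h
  have hmult : s * (2 - s) = -(5 - 2 * s) := by linear_combination -hs
  have hnorm : (5 - 2 * s) * (5 + 2 * s) = 5 := by linear_combination -4 * hs
  have hsq : 5 * (s - 2) ^ 2 = (5 - 2 * s) ^ 2 := by linear_combination hs
  unfold cubicCoord
  rw [← hn, ← hm, hmult]
  rw [← hm] at hx
  generalize 5 - 2 * s = c at *
  generalize 5 + 2 * s = c' at *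
  generalize s - 2 = t at *
  field_simp
  linear_combination 320 * y ^ 2 * hsq - c ^ 2 * hy - c * n * m ^ 3 * hnorm

theorem sq_add_self_sub_one_eq_zero_of_quartic (hs : s ^ 2 = 5)
    (hcubic : ∀ x y : K, y ^ 2 = x * (x ^ 2 + 2 * x + 5) → x = 0)
    (h : -5 * y ^ 2 = 2 * (x ^ 2 + x - 1) * (x ^ 2 + (7 / 2) * x + 27 / 8)) :
    x ^ 2 + x - 1 = 0 := by
  suffices hroots : (2 * x + 1 - s) * (2 * x + 1 + s) = 0 by linear_combination (hroots + hs) / 4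
  by_cases hden : 2 * x + 1 + s = 0
  · rw [hden, mul_zero]
  have hzero : s * (2 - s) * (2 * x + 1 - s) = 0 :=
    (div_eq_zero_iff.1 (hcubic _ _ (sq_eq_cubicCoord_of_quartic hs hden h))).resolve_right hden
  have hunit : s * (2 - s) ≠ 0 := fun h0 => by
    have : (5 : K) = 0 := by linear_combination -(5 + 2 * s) * h0 - (2 * s + 1) * hs
    norm_num at this
  rw [(mul_eq_zero.1 hzero).resolve_left hunit, zero_mul]

end Quartic

theorem eq_zero_of_sq_eq_of_adjoin_sqrt_five {x y : ℚ⟮√5⟯}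
    (h : y ^ 2 = x * (x ^ 2 + 2 * x + 5)) : x = 0 := by
  have h5 : ¬ IsSquare (5 : ℚ) := by
    simpa using mt Rat.isSquare_natCast_iff.1 Nat.prime_five.prime.not_isSquare
  have hroot : (x : ℝ) ^ 2 + 2 * x + 5 ≠ 0 := by nlinarith [sq_nonneg (x + 1 : ℝ)]
  have hreal : (y : ℝ) ^ 2 = x * ((x : ℝ) ^ 2 + 2 * x + 5) := congrArg Subtype.val h
  refine Subtype.ext (eq_zero_of_sq_eq_of_mem_adjoin_sqrt (A := 2) (B := 5) two_ne_zero (d := 5)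
    (by simp) h5 (fun _ y hxy => ?_) (fun _ y hxy => ?_) x.2 y.2
    (by simpa using hroot) (by simpa using hreal))
  · exact eq_zero_of_five_pow_mul_sq_eq (j := 0) (y := y) (by simpa using hxy)
  · exact eq_zero_of_five_pow_mul_sq_eq (j := 1) (y := y) (by simpa using hxy)

/-- The determination of `K = ℚ(√5)`-points of the genus-one curve
`-5y² = 2(x² + x - 1)(x² + (7/2)x + 27/8)` used in the proof of Proposition 7.2:
any such point has `y = 0` and `x² + x - 1 = 0`, i.e. `x = (-1 ± √5)/2`. -/
theorem stmt_16 (x y : ℚ⟮(Real.sqrt 5 : ℝ)⟯)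
    (h : -5 * y ^ 2 = 2 * (x ^ 2 + x - 1) * (x ^ 2 + (7 / 2) * x + 27 / 8)) :
    y = 0 ∧ x ^ 2 + x - 1 = 0 ∧
      ((x : ℝ) = (-1 + Real.sqrt 5) / 2 ∨ (x : ℝ) = (-1 - Real.sqrt 5) / 2) := by
  have hsqrt : √5 ^ 2 = 5 := Real.sq_sqrt (by norm_num)
  have hgen : AdjoinSimple.gen ℚ √5 ^ 2 = 5 := Subtype.ext hsqrt
  have hx : x ^ 2 + x - 1 = 0 := sq_add_self_sub_one_eq_zero_of_quartic hgen
    (fun _ _ => eq_zero_of_sq_eq_of_adjoin_sqrt_five) h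
  have hreal : (x : ℝ) ^ 2 + x - 1 = 0 := congrArg Subtype.val hx
  have hfactor : ((x : ℝ) - (-1 + √5) / 2) * (x - (-1 - √5) / 2) = 0 := by
    linear_combination hreal - hsqrt / 4
  exact ⟨by simpa [hx] using h, hx, (mul_eq_zero.1 hfactor).imp sub_eq_zero.1 sub_eq_zero.1⟩
end
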